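/- arXiv:1903.03164 — 2 statements merged into one kernel-verified Lean document; each statement's English description precedes it below -/
import Mathlib

section
/- For every i with 1 ≤ i ≤ n, the sub-stream rates assigned by Algorithm 1 during outer-loop iteration i never over-allocate the stream: ∑_{j=1}^n r_{i,j} ≤ R_i (no sustainability assumption needed, only R_i > 0 and R_j ≤ C_u(j) for all j). -/
open Finset

/-- Inner loop of Algorithm 1: processes the column indices `js` in order,
starting from remaining rate `R'` and residual uplink bandwidths `U`.
For each `j`: if `(n-2)·R' > U j` then `r := U j / (n-2)` else `r := R'`;
then `U j` decreases by `(n-2)·r` and `R'` by `r`; exit early once `R' = 0`.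
Returns the assigned row of sub-stream rates and the updated residual uplinks. -/
noncomputable def innerLoop (n : ℕ) : ℝ → (Fin n → ℝ) → List (Fin n) → (Fin n → ℝ) × (Fin n → ℝ)
  | _, U, [] => (fun _ => 0, U)
  | R', U, j :: js =>
      let rij : ℝ := if (n - 2 : ℝ) * R' > U j then U j / (n - 2 : ℝ) else R'
      let U' : Fin n → ℝ := Function.update U j (U j - (n - 2 : ℝ) * rij)
      if R' - rij = 0 then
        (Function.update (fun _ => (0 : ℝ)) j rij, U')
      else
        let rest := innerLoop n (R' - rij) U' js
        (Function.update rest.1 j rij, rest.2)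

/-- Outer loop of Algorithm 1 over the list `is` of row indices, carrying the
rate matrix `r` computed so far and the residual uplinks `U`. -/
noncomputable def outerLoop (n : ℕ) (R : Fin n → ℝ) :
    (Fin n → Fin n → ℝ) → (Fin n → ℝ) → List (Fin n) → (Fin n → Fin n → ℝ) × (Fin n → ℝ)
  | r, U, [] => (r, U)
  | r, U, i :: is =>
      let res := innerLoop n (R i) U (List.finRange n)
      outerLoop n R (Function.update r i res.1) res.2 is

/-- The matrix of sub-stream rates output by Algorithm 1, with initial
residual uplinks `U j := Cu j - R j` and rows/columns processed in order. -/
noncomputable def algOutput (n : ℕ) (Cu R : Fin n → ℝ) : Fin n → Fin n → ℝ :=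
  (outerLoop n R (fun _ _ => 0) (fun j => Cu j - R j) (List.finRange n)).1

/-- `Ustart n Cu R k i` is the residual uplink bandwidth `U_i` after the first `k`
outer-loop iterations of Algorithm 1, i.e. the value `U_i[k+1]` at the start of
(1-indexed) outer-loop iteration `k+1`. -/
noncomputable def Ustart (n : ℕ) (Cu R : Fin n → ℝ) (k : ℕ) : Fin n → ℝ :=
  (outerLoop n R (fun _ _ => 0) (fun j => Cu j - R j) ((List.finRange n).take k)).2

/-- The rates `R` are sustainable w.r.t. uplink capacities `Cu` and downlink
capacities `Cd`: (1) `R i ≤ Cu i`; (2) `∑_{j ≠ i} R j ≤ Cd i`;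
(3) `(n-1)·∑ R ≤ ∑ Cu`. -/
def Sustainable (n : ℕ) (Cu Cd R : Fin n → ℝ) : Prop :=
  (∀ i, R i ≤ Cu i) ∧
  (∀ i : Fin n, ∑ j ∈ Finset.univ.erase i, R j ≤ Cd i) ∧
  ((n : ℝ) - 1) * (∑ i, R i) ≤ ∑ i, Cu i

lemma innerLoop_inv (n : ℕ) (hn : 3 ≤ n) (js : List (Fin n)) : ∀ (R' : ℝ) (U : Fin n → ℝ),
    0 ≤ R' → (∀ j, 0 ≤ U j) →
    (∀ j, 0 ≤ (innerLoop n R' U js).1 j) ∧ (∑ j, (innerLoop n R' U js).1 j ≤ R') ∧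
      (∀ j, 0 ≤ (innerLoop n R' U js).2 j) := by
  have hc : (0 : ℝ) < (n - 2 : ℝ) := by
    have : (3 : ℝ) ≤ n := by exact_mod_cast hn
    linarith
  induction js with
  | nil => intro R' U hR hU; simpa [innerLoop] using ⟨hR, hU⟩
  | cons j js ih =>
    intro R' U hR hU
    simp only [innerLoop]
    set rij : ℝ := if (n - 2 : ℝ) * R' > U j then U j / (n - 2 : ℝ) else R' with hrij
    set U' : Fin n → ℝ := Function.update U j (U j - (n - 2 : ℝ) * rij) with hU'
    have h0 : 0 ≤ rij := by
      rw [hrij]; split_ifs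
      · exact div_nonneg (hU j) hc.le
      · exact hR
    have h1 : rij ≤ R' := by
      rw [hrij]; split_ifs with h
      · rw [div_le_iff₀ hc]; nlinarith
      · exact le_rfl
    have h2 : 0 ≤ U j - (n - 2 : ℝ) * rij := by
      rw [hrij]; split_ifs with h
      · rw [mul_div_cancel₀ _ hc.ne']; simp
      · linarith
    have h3 : ∀ k, 0 ≤ U' k := by
      intro k
      simp only [hU', Function.update_apply]
      split_ifs
      · exact h2
      · exact hU k
    have key : ∀ f : Fin n → ℝ, (∀ k, 0 ≤ f k) → ∑ k, f k ≤ R' - rij →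
        (∀ k, 0 ≤ Function.update f j rij k) ∧ ∑ k, Function.update f j rij k ≤ R' := by
      intro f hf hs
      constructor
      · intro k
        simp only [Function.update_apply]
        split_ifs
        · exact h0
        · exact hf k
      · rw [Finset.sum_update_of_mem (Finset.mem_univ j)]
        have : ∑ x ∈ univ \ {j}, f x ≤ ∑ k, f k :=
          Finset.sum_le_sum_of_subset_of_nonneg (Finset.subset_univ _) (fun k _ _ => hf k)
        linarith
    split_ifs with h
    · obtain ⟨a, b⟩ := key (fun _ => 0) (fun _ => le_rfl) (by simpa using h1)
      exact ⟨a, b, h3⟩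
    · obtain ⟨p, q, s⟩ := ih (R' - rij) U' (by linarith) h3
      obtain ⟨a, b⟩ := key _ p q
      exact ⟨a, b, s⟩

lemma outerLoop_inv (n : ℕ) (hn : 3 ≤ n) (R : Fin n → ℝ) (hR : ∀ i, 0 < R i)
    (is : List (Fin n)) : ∀ (r : Fin n → Fin n → ℝ) (U : Fin n → ℝ),
    (∀ j, 0 ≤ U j) → (∀ i, ∑ j, r i j ≤ R i) →
    ∀ i, ∑ j, (outerLoop n R r U is).1 i j ≤ R i := by
  induction is with
  | nil => intro r U _ h; simpa [outerLoop] using h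
  | cons k is ih =>
    intro r U hU h
    rw [outerLoop]
    obtain ⟨_, q, s⟩ := innerLoop_inv n hn (List.finRange n) (R k) U (hR k).le hU
    apply ih _ _ s
    intro i
    by_cases hik : i = k
    · subst hik; simpa using q
    · simpa [Function.update_of_ne hik] using h i

/-- Assuming only `R j > 0` and `R j ≤ Cu j` for all `j`, the
rates assigned during each outer-loop iteration `i` never over-allocate the
stream: `∑_j r i j ≤ R i`. -/
theorem no_overallocation (n : ℕ) (hn : 3 ≤ n) (Cu R : Fin n → ℝ)
    (hCu : ∀ i, 0 < Cu i) (hR : ∀ i, 0 < R i)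
    (hRCu : ∀ j, R j ≤ Cu j) :
    ∀ i : Fin n, ∑ j, algOutput n Cu R i j ≤ R i := by
  exact outerLoop_inv n hn R hR _ _ _ (fun j => sub_nonneg.2 (hRCu j))
    (fun i => by simpa using (hR i).le)
end

section
/- Suppose the rates R_1, …, R_n are sustainable. Then the output r of Algorithm 1 simultaneously satisfies all three correctness criteria: (i) for every i, ∑_{j=1}^n r_{i,j} = R_i (Valid Partition Constraint); (ii) for every i, R_i + (n−2)·∑_{k=1}^n r_{k,i} ≤ C_u(i) (Uplink Capacity Constraint); (iii) for every i, ∑_{k ≠ i} ∑_{j=1}^n r_{k,j} ≤ C_d(i) (Downlink Capacity Constraint). In particular, Algorithm 1 produces a witness for Theorem 1. -/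
open Finset

theorem innerLoop_spec (n : ℕ) (hm : (0 : ℝ) < (n - 2 : ℝ)) (js : List (Fin n)) :
    ∀ (R' : ℝ) (U : Fin n → ℝ), js.Nodup → 0 ≤ R' → (∀ j, 0 ≤ U j) →
      (n - 2 : ℝ) * R' ≤ (js.map U).sum →
      (∀ j, j ∉ js → (innerLoop n R' U js).1 j = 0) ∧
      (∀ j, (innerLoop n R' U js).2 j = U j - (n - 2 : ℝ) * (innerLoop n R' U js).1 j) ∧
      (∀ j, 0 ≤ (innerLoop n R' U js).2 j) ∧
      ∑ j, (innerLoop n R' U js).1 j = R' := by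
  induction js with
  | nil =>
    intro R' U _ hR hU h
    simp only [List.map_nil, List.sum_nil] at h
    have : R' = 0 := by nlinarith
    simp [innerLoop, this, hU]
  | cons j js ih =>
    intro R' U hnd hR hU h
    rw [List.nodup_cons] at hnd
    obtain ⟨hj, hnd⟩ := hnd
    simp only [List.map_cons, List.sum_cons] at h
    by_cases hc : (n - 2 : ℝ) * R' > U j
    · have hmr : (n - 2 : ℝ) * (U j / (n - 2 : ℝ)) = U j := by field_simp
      have hpos : 0 < R' - U j / (n - 2 : ℝ) := by
        rw [sub_pos, div_lt_iff₀ hm]; linarith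
      have hmap : js.map (Function.update U j 0) = js.map U := by
        apply List.map_congr_left
        intro k hk
        rw [Function.update_of_ne]
        rintro rfl; exact hj hk
      obtain ⟨h1, h2, h3, h4⟩ := ih (R' - U j / (n - 2 : ℝ)) (Function.update U j 0) hnd hpos.le
        (by intro k; by_cases hk : k = j
            · subst hk; simp
            · simp [hk, hU])
        (by rw [hmap, mul_sub, hmr]; linarith)
      have e : innerLoop n R' U (j :: js) =
          (Function.update (innerLoop n (R' - U j / (n - 2 : ℝ)) (Function.update U j 0) js).1 j
            (U j / (n - 2 : ℝ)),
           (innerLoop n (R' - U j / (n - 2 : ℝ)) (Function.update U j 0) js).2) := by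
        simp only [innerLoop, if_pos hc, hmr, sub_self, if_neg hpos.ne']
      rw [e]
      generalize innerLoop n (R' - U j / (n - 2 : ℝ)) (Function.update U j 0) js = q at *
      refine ⟨?_, ?_, h3, ?_⟩
      · intro k hk
        simp only [List.mem_cons, not_or] at hk
        simp [hk.1, h1 k hk.2]
      · intro k
        by_cases hk : k = j
        · subst hk
          simp only [Function.update_self, h2, h1 _ hj, hmr]; ring
        · simp [hk, h2]
      · rw [Finset.sum_update_of_mem (Finset.mem_univ j)]
        rw [← Finset.add_sum_erase _ _ (Finset.mem_univ j), h1 _ hj] at h4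
        rw [Finset.sdiff_singleton_eq_erase]
        linarith
    · have e : innerLoop n R' U (j :: js) =
          (Function.update (fun _ => (0 : ℝ)) j R',
            Function.update U j (U j - (n - 2 : ℝ) * R')) := by
        simp only [innerLoop, if_neg hc, sub_self, if_true]
      rw [e]
      refine ⟨?_, ?_, ?_, ?_⟩
      · intro k hk
        simp only [List.mem_cons, not_or] at hk
        simp [hk.1]
      · intro k
        by_cases hk : k = j
        · subst hk; simp
        · simp [hk]
      · intro k
        by_cases hk : k = j
        · subst hk
          simp only [Function.update_self]; linarith
        · simp [hk, hU]
      · rw [Finset.sum_update_of_mem (Finset.mem_univ j)]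
        simp

theorem outerLoop_spec (n : ℕ) (hm : (0 : ℝ) < (n - 2 : ℝ)) (R : Fin n → ℝ)
    (hR : ∀ i, 0 < R i) (is : List (Fin n)) :
    ∀ (r : Fin n → Fin n → ℝ) (U : Fin n → ℝ), is.Nodup → (∀ j, 0 ≤ U j) →
      (∀ i ∈ is, ∀ j, r i j = 0) →
      (n - 2 : ℝ) * (is.map R).sum ≤ ∑ j, U j →
      (∀ i, i ∉ is → (outerLoop n R r U is).1 i = r i) ∧
      (∀ i ∈ is, ∑ j, (outerLoop n R r U is).1 i j = R i) ∧
      (∀ j, (outerLoop n R r U is).2 j + (n - 2 : ℝ) * ∑ k, (outerLoop n R r U is).1 k j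
        = U j + (n - 2 : ℝ) * ∑ k, r k j) ∧
      (∀ j, 0 ≤ (outerLoop n R r U is).2 j) := by
  induction is with
  | nil =>
    intro r U _ hU _ _
    simp [outerLoop, hU]
  | cons i is ih =>
    intro r U hnd hU hr h
    rw [List.nodup_cons] at hnd
    obtain ⟨hi, hnd⟩ := hnd
    simp only [List.map_cons, List.sum_cons, mul_add] at h
    have hs : 0 ≤ (is.map R).sum := by
      apply List.sum_nonneg
      intro x hx
      obtain ⟨k, _, rfl⟩ := List.mem_map.1 hx
      exact (hR k).le
    have hs' := mul_nonneg hm.le hs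
    obtain ⟨_, g2, g3, g4⟩ := innerLoop_spec n hm (List.finRange n) (R i) U
      (List.nodup_finRange n) (hR i).le hU (by
        rw [← List.ofFn_eq_map, List.sum_ofFn]; linarith)
    simp only [outerLoop]
    generalize innerLoop n (R i) U (List.finRange n) = q at *
    obtain ⟨h1, h2, h3, h4⟩ := ih (Function.update r i q.1) q.2 hnd g3
      (by intro k hk j
          rw [Function.update_of_ne]
          · exact hr k (List.mem_cons_of_mem _ hk) j
          · rintro rfl; exact hi hk)
      (by simp only [g2, Finset.sum_sub_distrib, ← Finset.mul_sum, g4]; linarith)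
    refine ⟨?_, ?_, ?_, h4⟩
    · intro k hk
      simp only [List.mem_cons, not_or] at hk
      rw [h1 k hk.2, Function.update_of_ne hk.1]
    · intro k hk
      rcases List.mem_cons.1 hk with rfl | hk
      · rw [h1 _ hi, Function.update_self, g4]
      · exact h2 k hk
    · intro j
      rw [h3 j, g2 j]
      rw [← Finset.add_sum_erase _ _ (Finset.mem_univ i),
        ← Finset.add_sum_erase _ (fun k => r k j) (Finset.mem_univ i)]
      have : ∑ k ∈ Finset.univ.erase i, Function.update r i q.1 k j
          = ∑ k ∈ Finset.univ.erase i, r k j := by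
        apply Finset.sum_congr rfl
        intro k hk
        rw [Function.update_of_ne (Finset.ne_of_mem_erase hk)]
      rw [this, Function.update_self, hr i List.mem_cons_self j]
      ring

/-- If the rates are sustainable, the output of Algorithm 1
simultaneously satisfies all three correctness criteria: (i) Valid Partition,
(ii) Uplink Capacity, (iii) Downlink Capacity — hence it is a witness for
Theorem 1. -/
theorem algorithm_correct (n : ℕ) (hn : 3 ≤ n) (Cu Cd R : Fin n → ℝ)
    (hCu : ∀ i, 0 < Cu i) (hCd : ∀ i, 0 < Cd i) (hR : ∀ i, 0 < R i)
    (hsus : Sustainable n Cu Cd R) :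
    (∀ i : Fin n, ∑ j, algOutput n Cu R i j = R i) ∧
    (∀ i : Fin n, R i + ((n : ℝ) - 2) * (∑ k, algOutput n Cu R k i) ≤ Cu i) ∧
    (∀ i : Fin n, ∑ k ∈ Finset.univ.erase i, ∑ j, algOutput n Cu R k j ≤ Cd i) := by
  obtain ⟨s1, s2, s3⟩ := hsus
  have hm : (0 : ℝ) < (n - 2 : ℝ) := by
    have : (3 : ℝ) ≤ n := by exact_mod_cast hn
    linarith
  obtain ⟨_, h2, h3, h4⟩ := outerLoop_spec n hm R hR (List.finRange n) (fun _ _ => 0)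
    (fun j => Cu j - R j) (List.nodup_finRange n) (fun j => sub_nonneg.2 (s1 j))
    (fun _ _ _ => rfl) (by
      rw [← List.ofFn_eq_map, List.sum_ofFn, Finset.sum_sub_distrib]; linarith)
  have hp : ∀ i : Fin n, ∑ j, algOutput n Cu R i j = R i :=
    fun i => h2 i (List.mem_finRange i)
  refine ⟨hp, ?_, ?_⟩
  · intro i
    have a := h3 i
    have b := h4 i
    simp only [Finset.sum_const_zero, mul_zero, add_zero] at a
    unfold algOutput
    linarith
  · intro i
    simp only [hp]
    exact s2 i
end
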